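/- Let n ≥ 2 and let μ be the uniform probability measure on the unit sphere of the Euclidean space ℝⁿ (the normalized rotation-invariant surface measure). Then ∫ (Σ_{j=1}^{n} |x_j|)² dμ(x) = 1 + 2(n−1)/π. (This is the second moment of the projected (n−1)-dimensional volume of a unit n-cube onto a uniformly random hyperplane.) -/

import Mathlib

open Real MeasureTheory

open scoped RealInnerProductSpace

/-!
Expanding the square, the diagonal terms sum to `‖x‖²`. For `i ≠ j`, the reflection in the line at
angle `θ / 2` in the `(i, j)`-plane preserves the measure, and it turns `|x_i x_j|` into
`(x_i² + x_j²) |sin (2 (θ - φ))| / 2`, where `φ` is the polar angle of `(x_i, x_j)`. The mean of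
`|sin|` is `2 / π`, so averaging over `θ` gives `∫ |x_i x_j| = ∫ (x_i² + x_j²) / π`; each coordinate
occurs in `2 (n - 1)` ordered pairs.
-/

lemma integral_abs_sin_add_pi (a : ℝ) : ∫ t in a..a + π, |sin t| = 2 := by
  have hper : Function.Periodic (fun t => |sin t|) π := fun t => by
    simp only [sin_add_pi, abs_neg]
  have hnonneg : ∀ t ∈ Set.uIcc 0 π, |sin t| = sin t := fun t ht => by
    rw [Set.uIcc_of_le pi_nonneg] at ht
    exact abs_of_nonneg (sin_nonneg_of_mem_Icc ht)
  calc ∫ t in a..a + π, |sin t| = ∫ t in (0 : ℝ)..π, |sin t| := by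
        simpa only [zero_add] using hper.intervalIntegral_add_eq a 0
    _ = ∫ t in (0 : ℝ)..π, sin t := intervalIntegral.integral_congr hnonneg
    _ = 2 := by rw [integral_sin, cos_zero, cos_pi]; norm_num

lemma abs_reflected_coord_mul_le (a b t : ℝ) :
    |(a * cos t + b * sin t) * (a * sin t - b * cos t)| ≤ a ^ 2 + b ^ 2 := by
  have hnorm : (a * cos t + b * sin t) ^ 2 + (a * sin t - b * cos t) ^ 2 = a ^ 2 + b ^ 2 := by
    linear_combination (a ^ 2 + b ^ 2) * sin_sq_add_cos_sq t
  rw [← hnorm, abs_le]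
  constructor <;>
    nlinarith [sq_nonneg ((a * cos t + b * sin t) + (a * sin t - b * cos t)),
      sq_nonneg ((a * cos t + b * sin t) - (a * sin t - b * cos t))]

lemma integral_abs_reflected_coord_mul (a b : ℝ) :
    ∫ t in (0 : ℝ)..π / 2, |(a * cos t + b * sin t) * (a * sin t - b * cos t)|
      = (a ^ 2 + b ^ 2) / 2 := by
  obtain ⟨r, φ, ha, hb⟩ : ∃ r φ : ℝ, a = r * cos φ ∧ b = r * sin φ :=
    ⟨‖(⟨a, b⟩ : ℂ)‖, Complex.arg ⟨a, b⟩,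
      (Complex.norm_mul_cos_arg ⟨a, b⟩).symm, (Complex.norm_mul_sin_arg ⟨a, b⟩).symm⟩
  have hprod (t : ℝ) : |(a * cos t + b * sin t) * (a * sin t - b * cos t)|
      = r ^ 2 / 2 * |sin (2 * t - 2 * φ)| := by
    rw [← abs_of_nonneg (by positivity : 0 ≤ r ^ 2 / 2), ← abs_mul, ← mul_sub, sin_two_mul,
      cos_sub, sin_sub, ha, hb]
    ring_nf
  have hend : 2 * (π / 2) - 2 * φ = 2 * 0 - 2 * φ + π := by ring
  simp_rw [hprod]
  rw [intervalIntegral.integral_const_mul,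
    intervalIntegral.integral_comp_mul_sub (fun t => |sin t|) two_ne_zero, hend,
    integral_abs_sin_add_pi, smul_eq_mul, ha, hb]
  linear_combination (-r ^ 2 / 2) * sin_sq_add_cos_sq φ

section InnerProductSpace

variable {E : Type*} [NormedAddCommGroup E] [InnerProductSpace ℝ E]

lemma exists_linearIsometryEquiv_reflect_pair {u v : E} (hu : ‖u‖ = 1) (hv : ‖v‖ = 1)
    (huv : ⟪u, v⟫ = 0) (θ : ℝ) :
    ∃ R : E ≃ₗᵢ[ℝ] E, R u = cos θ • u + sin θ • v ∧ R v = sin θ • u - cos θ • v := by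
  obtain ⟨α, rfl⟩ : ∃ α, θ = 2 * α := ⟨θ / 2, by ring⟩
  let w : E := cos α • u + sin α • v
  have hwu : ⟪w, u⟫ = cos α := by
    simp [w, inner_add_left, real_inner_smul_left, hu, real_inner_comm u v, huv]
  have hwv : ⟪w, v⟫ = sin α := by
    simp [w, inner_add_left, real_inner_smul_left, hv, huv]
  have hw : ‖w‖ = 1 := by
    rw [← sq_eq_sq₀ (norm_nonneg w) zero_le_one, ← real_inner_self_eq_norm_sq]
    calc ⟪w, w⟫ = cos α * ⟪w, u⟫ + sin α * ⟪w, v⟫ := by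
          rw [← real_inner_smul_right, ← real_inner_smul_right, ← inner_add_right]
      _ = 1 ^ 2 := by rw [hwu, hwv]; linear_combination cos_sq_add_sin_sq α
  refine ⟨(ℝ ∙ w).reflection, ?_, ?_⟩
  · rw [Submodule.reflection_singleton_apply, hwu, hw, cos_two_mul, sin_two_mul]
    simp only [w, RCLike.ofReal_real_eq_id, id]
    module
  · rw [Submodule.reflection_singleton_apply, hwv, hw, cos_two_mul, sin_two_mul, cos_sq']
    simp only [w, RCLike.ofReal_real_eq_id, id]
    module

variable [MeasurableSpace E] [BorelSpace E] {μ : Measure E}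

lemma integral_abs_inner_mul_inner_reflect (hinv : ∀ R : E ≃ₗᵢ[ℝ] E, μ.map R = μ) {u v : E}
    (hu : ‖u‖ = 1) (hv : ‖v‖ = 1) (huv : ⟪u, v⟫ = 0) (θ : ℝ) :
    ∫ x, |(⟪u, x⟫ * cos θ + ⟪v, x⟫ * sin θ) * (⟪u, x⟫ * sin θ - ⟪v, x⟫ * cos θ)| ∂μ
      = ∫ x, |⟪u, x⟫ * ⟪v, x⟫| ∂μ := by
  obtain ⟨R, hRu, hRv⟩ := exists_linearIsometryEquiv_reflect_pair hu hv huv θ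
  conv_rhs => rw [← hinv R.symm]
  rw [integral_map R.symm.continuous.aemeasurable
    (Continuous.aestronglyMeasurable (by fun_prop))]
  simp only [← LinearIsometryEquiv.inner_map_eq_flip, hRu, hRv, inner_add_left, inner_sub_left,
    real_inner_smul_left, mul_comm]

lemma integral_abs_inner_mul_inner [SFinite μ] (hinv : ∀ R : E ≃ₗᵢ[ℝ] E, μ.map R = μ) {u v : E}
    (hu : ‖u‖ = 1) (hv : ‖v‖ = 1) (huv : ⟪u, v⟫ = 0)
    (hu₂ : MemLp (fun x => ⟪u, x⟫) 2 μ) (hv₂ : MemLp (fun x => ⟪v, x⟫) 2 μ) :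
    ∫ x, |⟪u, x⟫ * ⟪v, x⟫| ∂μ = (∫ x, ⟪u, x⟫ ^ 2 ∂μ + ∫ x, ⟪v, x⟫ ^ 2 ∂μ) / π := by
  let F (t : ℝ) (x : E) : ℝ :=
    |(⟪u, x⟫ * cos t + ⟪v, x⟫ * sin t) * (⟪u, x⟫ * sin t - ⟪v, x⟫ * cos t)|
  have hF_int : Integrable (Function.uncurry F)
      ((volume.restrict (Set.uIoc 0 (π / 2))).prod μ) := by
    have : IsFiniteMeasure (volume.restrict (Set.uIoc 0 (π / 2))) := by
      rw [Set.uIoc]; infer_instance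
    refine ((hu₂.integrable_sq.add hv₂.integrable_sq).comp_snd _).mono'
      (Continuous.aestronglyMeasurable (by unfold Function.uncurry; fun_prop)) ?_
    exact .of_forall fun ⟨t, x⟩ => (norm_abs_eq_norm _).trans_le (abs_reflected_coord_mul_le _ _ t)
  have hswap : π / 2 * ∫ x, |⟪u, x⟫ * ⟪v, x⟫| ∂μ
      = (∫ x, ⟪u, x⟫ ^ 2 ∂μ + ∫ x, ⟪v, x⟫ ^ 2 ∂μ) / 2 :=
    calc π / 2 * ∫ x, |⟪u, x⟫ * ⟪v, x⟫| ∂μ = ∫ t in (0 : ℝ)..π / 2, ∫ x, F t x ∂μ := by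
          simp_rw [F, integral_abs_inner_mul_inner_reflect hinv hu hv huv]
          rw [intervalIntegral.integral_const, sub_zero, smul_eq_mul]
      _ = ∫ x, (∫ t in (0 : ℝ)..π / 2, F t x) ∂μ := intervalIntegral_integral_swap hF_int
      _ = ∫ x, (⟪u, x⟫ ^ 2 + ⟪v, x⟫ ^ 2) / 2 ∂μ := by
          simp_rw [F, integral_abs_reflected_coord_mul]
      _ = (∫ x, ⟪u, x⟫ ^ 2 ∂μ + ∫ x, ⟪v, x⟫ ^ 2 ∂μ) / 2 := by
          rw [integral_div, integral_add hu₂.integrable_sq hv₂.integrable_sq]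
  field_simp at hswap ⊢
  linarith

lemma integral_sq_sum_abs_inner_of_orthonormal [SFinite μ]
    (hinv : ∀ R : E ≃ₗᵢ[ℝ] E, μ.map R = μ) {ι : Type*} [Fintype ι] {e : ι → E}
    (he : Orthonormal ℝ e) (he₂ : ∀ i, MemLp (fun x => ⟪e i, x⟫) 2 μ) :
    ∫ x, (∑ i, |⟪e i, x⟫|) ^ 2 ∂μ
      = (1 + 2 * ((Fintype.card ι : ℝ) - 1) / π) * ∑ i, ∫ x, ⟪e i, x⟫ ^ 2 ∂μ := by
  classical
  have hint (i j : ι) : Integrable (fun x => |⟪e i, x⟫ * ⟪e j, x⟫|) μ :=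
    ((he₂ i).integrable_mul (he₂ j)).abs
  have hpair (i j : ι) : ∫ x, |⟪e i, x⟫ * ⟪e j, x⟫| ∂μ
      = (∫ x, ⟪e i, x⟫ ^ 2 ∂μ + ∫ x, ⟪e j, x⟫ ^ 2 ∂μ) / π
        + if i = j then (1 - 2 / π) * ∫ x, ⟪e i, x⟫ ^ 2 ∂μ else 0 := by
    split_ifs with hij
    · subst hij
      simp only [← pow_two, abs_sq]
      ring
    · rw [integral_abs_inner_mul_inner hinv (he.1 i) (he.1 j) (he.2 hij) (he₂ i) (he₂ j), add_zero]
  calc ∫ x, (∑ i, |⟪e i, x⟫|) ^ 2 ∂μ = ∫ x, ∑ i, ∑ j, |⟪e i, x⟫ * ⟪e j, x⟫| ∂μ := by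
        simp_rw [pow_two, Finset.sum_mul_sum, abs_mul]
    _ = ∑ i, ∑ j, ∫ x, |⟪e i, x⟫ * ⟪e j, x⟫| ∂μ := by
        rw [integral_finsetSum _ fun i _ => integrable_finsetSum _ fun j _ => hint i j]
        simp_rw [integral_finsetSum _ fun j _ => hint _ j]
    _ = (1 + 2 * ((Fintype.card ι : ℝ) - 1) / π) * ∑ i, ∫ x, ⟪e i, x⟫ ^ 2 ∂μ := by
        simp only [hpair, Finset.sum_add_distrib, ← Finset.sum_div, Finset.sum_ite_eq,
          Finset.mem_univ, if_true, Finset.sum_const, Finset.card_univ, nsmul_eq_mul,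
          ← Finset.mul_sum]
        ring

theorem second_moment_projected_volume_ncube_general [SFinite μ]
    (hinv : ∀ R : E ≃ₗᵢ[ℝ] E, μ.map R = μ) (hμ : MemLp id 2 μ) {ι : Type*} [Fintype ι]
    (b : OrthonormalBasis ι ℝ E) :
    ∫ x, (∑ i, |⟪b i, x⟫|) ^ 2 ∂μ
      = (1 + 2 * ((Fintype.card ι : ℝ) - 1) / π) * ∫ x, ‖x‖ ^ 2 ∂μ := by
  have hb₂ (i : ι) : MemLp (fun x => ⟪b i, x⟫) 2 μ := hμ.const_inner (b i)
  rw [integral_sq_sum_abs_inner_of_orthonormal hinv b.orthonormal hb₂,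
    ← integral_finsetSum _ fun i _ => (hb₂ i).integrable_sq]
  simp_rw [b.sum_sq_inner_right]

end InnerProductSpace

section Sphere

variable {E : Type*} [NormedAddCommGroup E] [MeasurableSpace E] [OpensMeasurableSpace E]
  {μ : Measure E} [IsProbabilityMeasure μ] {r : ℝ}

lemma ae_norm_eq_of_measure_sphere_eq_one (h : μ (Metric.sphere 0 r) = 1) :
    ∀ᵐ x ∂μ, ‖x‖ = r := by
  have := (mem_ae_iff_prob_eq_one Metric.isClosed_sphere.measurableSet).2 h
  filter_upwards [this] with x hx using mem_sphere_zero_iff_norm.1 hx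

lemma memLp_id_of_measure_sphere_eq_one [SecondCountableTopology E] (p : ENNReal)
    (h : μ (Metric.sphere 0 r) = 1) : MemLp id p μ :=
  .of_bound aestronglyMeasurable_id r
    ((ae_norm_eq_of_measure_sphere_eq_one h).mono fun _ hx => hx.le)

lemma integral_norm_sq_of_measure_sphere_eq_one (h : μ (Metric.sphere 0 r) = 1) :
    ∫ x, ‖x‖ ^ 2 ∂μ = r ^ 2 := by
  rw [integral_congr_ae ((ae_norm_eq_of_measure_sphere_eq_one h).mono fun x hx =>
    congrArg (· ^ 2) hx), integral_const, probReal_univ, one_smul]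

end Sphere

/-- For `n ≥ 2`, the second moment of `x ↦ Σ_j |x_j|` with respect to the uniform
(i.e. the unique rotation-invariant) Borel probability measure on the unit sphere of
`ℝⁿ` equals `1 + 2(n−1)/π`.  This is the second moment of the projected
`(n−1)`-volume of a unit `n`-cube onto a uniformly random hyperplane. -/
theorem second_moment_projected_volume_ncube (n : ℕ) (hn : 2 ≤ n)
    (μ : Measure (EuclideanSpace ℝ (Fin n))) [IsProbabilityMeasure μ]
    (hsphere : μ (Metric.sphere (0 : EuclideanSpace ℝ (Fin n)) 1) = 1)
    (hinv : ∀ R : EuclideanSpace ℝ (Fin n) ≃ₗᵢ[ℝ] EuclideanSpace ℝ (Fin n),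
      Measure.map R μ = μ) :
    ∫ x, (∑ j, |x j|) ^ 2 ∂μ = 1 + 2 * ((n : ℝ) - 1) / π := by
  simpa [integral_norm_sq_of_measure_sphere_eq_one hsphere, EuclideanSpace.basisFun_inner,
    -EuclideanSpace.basisFun_apply] using second_moment_projected_volume_ncube_general hinv
      (memLp_id_of_measure_sphere_eq_one 2 hsphere) (EuclideanSpace.basisFun (Fin n) ℝ)
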